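/- arXiv:2001.00507 — 3 statements merged into one kernel-verified Lean document; each statement's English description precedes it below -/
import Mathlib

section
/- Let K, N ∈ ℕ with quadrature points ξ₀, …, ξ_N ∈ [−1,1] and weights ω*₀, …, ω*_N giving a quadrature rule that is exact on P_{2K}, let Δx > 0, and let u : ℝ → P_K be a differentiable family of polynomials of degree at most K. Suppose there exist a function F : ℝ → P_K and functions f_L, f_R : ℝ → ℝ such that the DGDLS scheme holds: for all t and all v ∈ P_K, (Δx/2) · Σ_{n=0}^N ω*_n (∂_t u)(t, ξ_n) v(ξ_n) = Σ_{n=0}^N ω*_n F(t, ξ_n) v'(ξ_n) − [ f_R(t) v(1) − f_L(t) v(−1) ]. Then the element is locally conservative: for all t, (Δx/2) · (d/dt) ∫_{−1}^1 u(t,ξ) dξ = −[ f_R(t) − f_L(t) ]. -/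
/-!
Testing the scheme against the constant `1` annihilates the volume term and leaves the balance
between the quadrature sum of `∂ₜ u` and the interface fluxes. As the quadrature integrates `u`
exactly, the derivative of `∫ u` is that same sum, so `u` is differentiated in time only at the
nodes and no exchange of derivative and integral is needed.
-/

section LocalConservation

open Polynomial

variable {ι : Type*} [Fintype ι] {a b c : ℝ} {ξ ω : ι → ℝ} {U V : Set ℝ[X]}

/-- The quadrature rule with nodes `ξ` and weights `ω` integrates every polynomial in `U` exactly
over `[a, b]`. Neither the location of the nodes nor the sign of the weights is restricted. -/
def QuadratureExactOn (ξ ω : ι → ℝ) (a b : ℝ) (U : Set ℝ[X]) : Prop :=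
  ∀ q ∈ U, ∑ n, ω n * q.eval (ξ n) = ∫ x in a..b, q.eval x

/-- The DGDLS scheme at a fixed time on the reference element `(a, b)`, with test space `V`, time
derivative `du`, flux approximation `F` and interface fluxes `fL`, `fR`. The factor `c` is the
ratio of physical to reference length, `Δx / 2` on `(-1, 1)`. -/
def SatisfiesDGDLS (ξ ω : ι → ℝ) (a b c : ℝ) (V : Set ℝ[X]) (du : ℝ[X]) (F : ℝ → ℝ)
    (fL fR : ℝ) : Prop :=
  ∀ v ∈ V, c * ∑ n, ω n * du.eval (ξ n) * v.eval (ξ n) =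
    (∑ n, ω n * F (ξ n) * v.derivative.eval (ξ n)) - (fR * v.eval b - fL * v.eval a)

theorem QuadratureExactOn.hasDerivAt_integral (h : QuadratureExactOn ξ ω a b U)
    {u : ℝ → ℝ[X]} {du : ι → ℝ} {t : ℝ} (hu : ∀ s, u s ∈ U)
    (hderiv : ∀ n, HasDerivAt (fun s => (u s).eval (ξ n)) (du n) t) :
    HasDerivAt (fun s => ∫ x in a..b, (u s).eval x) (∑ n, ω n * du n) t := by
  have integral_eq_sum : (fun s => ∫ x in a..b, (u s).eval x) =
      fun s => ∑ n, ω n * (u s).eval (ξ n) :=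
    funext fun s => (h (u s) (hu s)).symm
  rw [integral_eq_sum]
  exact HasDerivAt.fun_sum fun n _ => (hderiv n).const_mul (ω n)

theorem SatisfiesDGDLS.mul_sum_eq_neg_flux_sub {du : ℝ[X]} {F : ℝ → ℝ} {fL fR : ℝ}
    (h : SatisfiesDGDLS ξ ω a b c V du F fL fR) (hV : 1 ∈ V) :
    c * ∑ n, ω n * du.eval (ξ n) = -(fR - fL) := by
  simpa only [eval_one, mul_one, derivative_one, eval_zero, mul_zero, Finset.sum_const_zero,
    zero_sub] using h 1 hV

theorem dgdls_local_conservation_general (hexact : QuadratureExactOn ξ ω a b U) (hV : 1 ∈ V)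
    {u : ℝ → ℝ[X]} {du : ℝ[X]} {F : ℝ → ℝ} {fL fR t : ℝ} (hu : ∀ s, u s ∈ U)
    (hderiv : ∀ n, HasDerivAt (fun s => (u s).eval (ξ n)) (du.eval (ξ n)) t)
    (scheme : SatisfiesDGDLS ξ ω a b c V du F fL fR) :
    HasDerivAt (fun s => c * ∫ x in a..b, (u s).eval x) (-(fR - fL)) t := by
  rw [← scheme.mul_sum_eq_neg_flux_sub hV]
  exact (hexact.hasDerivAt_integral hu hderiv).const_mul c

end LocalConservation

theorem dgdls_local_conservation
    (K N : ℕ)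
    (ξ : Fin (N + 1) → ℝ) (hξ : ∀ n, ξ n ∈ Set.Icc (-1 : ℝ) 1)
    (ω : Fin (N + 1) → ℝ)
    (hexact : ∀ q : Polynomial ℝ, q.degree ≤ (2 * K : ℕ) →
      ∑ n : Fin (N + 1), ω n * q.eval (ξ n) = ∫ x in (-1 : ℝ)..1, q.eval x)
    (Δx : ℝ) (hΔx : 0 < Δx)
    (u du : ℝ → Polynomial ℝ)
    (hu : ∀ t, (u t).degree ≤ K) (hdu : ∀ t, (du t).degree ≤ K)
    (hderiv : ∀ t x : ℝ, HasDerivAt (fun s => (u s).eval x) ((du t).eval x) t)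
    (F : ℝ → Polynomial ℝ) (hF : ∀ t, (F t).degree ≤ K)
    (fL fR : ℝ → ℝ)
    (scheme : ∀ t : ℝ, ∀ v : Polynomial ℝ, v.degree ≤ K →
      Δx / 2 * ∑ n : Fin (N + 1), ω n * (du t).eval (ξ n) * v.eval (ξ n) =
        (∑ n : Fin (N + 1), ω n * (F t).eval (ξ n) * v.derivative.eval (ξ n)) -
          (fR t * v.eval 1 - fL t * v.eval (-1)))
    (t : ℝ) :
    HasDerivAt (fun s => Δx / 2 * ∫ x in (-1 : ℝ)..1, (u s).eval x)
      (-(fR t - fL t)) t := by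
  have degree_mono : (K : WithBot ℕ) ≤ (2 * K : ℕ) := Nat.cast_le.2 (by lia)
  exact dgdls_local_conservation_general (U := {q | q.degree ≤ K}) (F := fun x => (F t).eval x)
    (fun q hq => hexact q (le_trans hq degree_mono))
    (Polynomial.degree_one_le.trans (Nat.cast_nonneg K)) hu (fun n => hderiv t (ξ n)) (scheme t)
end

section
/- Let K, N ∈ ℕ with quadrature points ξ₀, …, ξ_N ∈ [−1,1] and weights ω*₀, …, ω*_N giving a quadrature rule exact on P_{2K}, let Δx > 0, and let u : ℝ → P_K be a differentiable family of polynomials of degree at most K. Suppose the DGDLS scheme for the linear advection equation holds (flux F = u): for all t and all v ∈ P_K, (Δx/2) · Σ_{n=0}^N ω*_n (∂_t u)(t, ξ_n) v(ξ_n) = Σ_{n=0}^N ω*_n u(t, ξ_n) v'(ξ_n) − [ f_R(t) v(1) − f_L(t) v(−1) ] for given f_L, f_R : ℝ → ℝ. Then the local energy rate satisfies, for all t, (Δx/2) · (d/dt) ∫_{−1}^1 u(t,ξ)² dξ = u(t,1)·[u(t,1) − 2 f_R(t)] − u(t,−1)·[u(t,−1) − 2 f_L(t)]. -/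
/-!
The energy density `u²` has degree at most `2K`, so the quadrature rule integrates the energy
exactly, and testing the scheme with `v = u` expresses the energy rate through
`2 ∑ ωₙ u(ξₙ) ∂_ξ u(ξₙ)` and the interface fluxes. Exactness also transfers integration by parts
to the quadrature sums, which reduces this advection term to the boundary values of `u²`.
-/

open Polynomial

/-- A quadrature rule with nodes `ξ` and weights `ω` is exact of degree `d` on `[a, b]` if it
integrates every real polynomial of degree at most `d` exactly. The nodes are arbitrary reals and
the weights may have any sign. -/
def IsExactQuadrature {ι : Type*} [Fintype ι] (ξ ω : ι → ℝ) (a b : ℝ) (d : ℕ) : Prop :=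
  ∀ q : ℝ[X], q.degree ≤ d → ∑ n, ω n * q.eval (ξ n) = ∫ x in a..b, q.eval x

theorem integral_eval_derivative (p : ℝ[X]) (a b : ℝ) :
    ∫ x in a..b, p.derivative.eval x = p.eval b - p.eval a :=
  intervalIntegral.integral_eq_sub_of_hasDerivAt (fun x _ => p.hasDerivAt x)
    (p.derivative.continuous.intervalIntegrable a b)

namespace IsExactQuadrature

variable {ι : Type*} [Fintype ι] {ξ ω : ι → ℝ} {a b : ℝ} {d : ℕ}

theorem sum_eval_derivative (hQ : IsExactQuadrature ξ ω a b d) {p : ℝ[X]}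
    (hp : p.natDegree ≤ d + 1) :
    ∑ n, ω n * p.derivative.eval (ξ n) = p.eval b - p.eval a := by
  have hdeg : p.derivative.natDegree ≤ d :=
    p.natDegree_derivative_le.trans (Nat.sub_le_of_le_add hp)
  rw [hQ _ (degree_le_of_natDegree_le hdeg), integral_eval_derivative]

theorem summation_by_parts (hQ : IsExactQuadrature ξ ω a b d) {p q : ℝ[X]}
    (hpq : p.natDegree + q.natDegree ≤ d + 1) :
    ∑ n, ω n * p.eval (ξ n) * q.derivative.eval (ξ n) =
      p.eval b * q.eval b - p.eval a * q.eval a -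
        ∑ n, ω n * q.eval (ξ n) * p.derivative.eval (ξ n) := by
  rw [eq_sub_iff_add_eq, ← eval_mul, ← eval_mul,
    ← hQ.sum_eval_derivative (natDegree_mul_le.trans hpq), ← Finset.sum_add_distrib]
  refine Finset.sum_congr rfl fun n _ => ?_
  rw [derivative_mul, eval_add, eval_mul, eval_mul]
  ring

theorem integral_sq (hQ : IsExactQuadrature ξ ω a b (2 * d)) {p : ℝ[X]} (hp : p.degree ≤ d) :
    ∫ x in a..b, p.eval x ^ 2 = ∑ n, ω n * p.eval (ξ n) ^ 2 := by
  have hdeg : (p ^ 2).natDegree ≤ 2 * d :=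
    natDegree_pow_le_of_le 2 (natDegree_le_of_degree_le hp)
  simpa only [eval_pow] using (hQ (p ^ 2) (degree_le_of_natDegree_le hdeg)).symm

theorem hasDerivAt_integral_sq (hQ : IsExactQuadrature ξ ω a b (2 * d)) {u : ℝ → ℝ[X]}
    (hu : ∀ s, (u s).degree ≤ d) {du : ι → ℝ} {t : ℝ}
    (hderiv : ∀ n, HasDerivAt (fun s => (u s).eval (ξ n)) (du n) t) :
    HasDerivAt (fun s => ∫ x in a..b, (u s).eval x ^ 2)
      (2 * ∑ n, ω n * du n * (u t).eval (ξ n)) t := by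
  simp only [hQ.integral_sq (hu _), Finset.mul_sum]
  refine HasDerivAt.fun_sum fun n _ => (((hderiv n).fun_pow 2).const_mul (ω n)).congr_deriv ?_
  norm_num
  ring

end IsExactQuadrature

theorem dgdls_local_energy_rate_linear_advection_general {ι : Type*} [Fintype ι]
    {ξ ω : ι → ℝ} {a b : ℝ} {K : ℕ} (hQ : IsExactQuadrature ξ ω a b (2 * K))
    {u : ℝ → ℝ[X]} (hu : ∀ s, (u s).degree ≤ K) {t : ℝ} {du : ι → ℝ}
    (hderiv : ∀ n, HasDerivAt (fun s => (u s).eval (ξ n)) (du n) t) {c fL fR : ℝ}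
    (scheme : ∀ v : ℝ[X], v.degree ≤ K →
      c * ∑ n, ω n * du n * v.eval (ξ n) =
        (∑ n, ω n * (u t).eval (ξ n) * v.derivative.eval (ξ n)) -
          (fR * v.eval b - fL * v.eval a)) :
    HasDerivAt (fun s => c * ∫ x in a..b, (u s).eval x ^ 2)
      ((u t).eval b * ((u t).eval b - 2 * fR) - (u t).eval a * ((u t).eval a - 2 * fL)) t := by
  have hdeg : (u t).natDegree ≤ K := natDegree_le_of_degree_le (hu t)
  have advection := hQ.summation_by_parts (p := u t) (q := u t) (by lia)
  have energy_balance := scheme (u t) (hu t)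
  refine ((hQ.hasDerivAt_integral_sq hu hderiv).const_mul c).congr_deriv ?_
  linear_combination 2 * energy_balance + advection

theorem dgdls_local_energy_rate_linear_advection
    (K N : ℕ)
    (ξ : Fin (N + 1) → ℝ) (hξ : ∀ n, ξ n ∈ Set.Icc (-1 : ℝ) 1)
    (ω : Fin (N + 1) → ℝ)
    (hexact : ∀ q : Polynomial ℝ, q.degree ≤ (2 * K : ℕ) →
      ∑ n : Fin (N + 1), ω n * q.eval (ξ n) = ∫ x in (-1 : ℝ)..1, q.eval x)
    (Δx : ℝ) (hΔx : 0 < Δx)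
    (u du : ℝ → Polynomial ℝ)
    (hu : ∀ t, (u t).degree ≤ K) (hdu : ∀ t, (du t).degree ≤ K)
    (hderiv : ∀ t x : ℝ, HasDerivAt (fun s => (u s).eval x) ((du t).eval x) t)
    (fL fR : ℝ → ℝ)
    (scheme : ∀ t : ℝ, ∀ v : Polynomial ℝ, v.degree ≤ K →
      Δx / 2 * ∑ n : Fin (N + 1), ω n * (du t).eval (ξ n) * v.eval (ξ n) =
        (∑ n : Fin (N + 1), ω n * (u t).eval (ξ n) * v.derivative.eval (ξ n)) -
          (fR t * v.eval 1 - fL t * v.eval (-1)))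
    (t : ℝ) :
    HasDerivAt (fun s => Δx / 2 * ∫ x in (-1 : ℝ)..1, ((u s).eval x) ^ 2)
      ((u t).eval 1 * ((u t).eval 1 - 2 * fR t) -
        (u t).eval (-1) * ((u t).eval (-1) - 2 * fL t)) t :=
  dgdls_local_energy_rate_linear_advection_general (K := K) hexact hu
    (fun n => hderiv t (ξ n)) (scheme t)
end

section
/- Let V be a real normed vector space, L : V → V a map, and Δt > 0 such that the explicit Euler step is nonexpansive: ‖w + Δt·L(w)‖ ≤ ‖w‖ for all w ∈ V. Then one step of the third-order strong stability preserving Runge–Kutta method SSPRK(3,3) is also nonexpansive: for any u ∈ V, defining u⁽¹⁾ = u + Δt·L(u), u⁽²⁾ = (3/4)u + (1/4)u⁽¹⁾ + (1/4)Δt·L(u⁽¹⁾), and u⁺ = (1/3)u + (2/3)u⁽²⁾ + (2/3)Δt·L(u⁽²⁾), one has ‖u⁺‖ ≤ ‖u‖. -/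
/-!
Each stage of SSPRK(3,3) is a convex combination of earlier stages and of explicit Euler steps with
the full step size. A convex set preserved by the Euler step is therefore preserved by every stage;
for a quasiconvex functional that the Euler step does not increase, such as a norm, this applies to
its sublevel set through `u`.
-/

section Stage

variable {𝕜 V : Type*} [Semiring 𝕜] [AddCommMonoid V] [Module 𝕜 V]

/-- One explicit Euler step of size `τ` for the semidiscretisation `du/dt = L u`. -/
def eulerStep (L : V → V) (τ : 𝕜) (w : V) : V :=
  w + τ • L w

/-- The stage `a x + b y + b τ L(y)` from which SSPRK(3,3) is assembled: `y` is the previous stage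
and `x` an earlier one. The weights `a` and `b` are separate parameters, not tied by `a + b = 1`. -/
def sspStage (L : V → V) (τ a b : 𝕜) (x y : V) : V :=
  a • x + b • y + (b * τ) • L y

theorem sspStage_eq_add_smul_eulerStep (L : V → V) (τ a b : 𝕜) (x y : V) :
    sspStage L τ a b x y = a • x + b • eulerStep L τ y := by
  rw [sspStage, eulerStep, smul_add, smul_smul, add_assoc]

theorem sspStage_mem_of_convex [PartialOrder 𝕜] {L : V → V} {τ a b : 𝕜} {s : Set V}
    (hs : Convex 𝕜 s) (hE : Set.MapsTo (eulerStep L τ) s s) (ha : 0 ≤ a) (hb : 0 ≤ b)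
    (hab : a + b = 1) {x y : V} (hx : x ∈ s) (hy : y ∈ s) :
    sspStage L τ a b x y ∈ s := by
  rw [sspStage_eq_add_smul_eulerStep]
  exact hs hx (hE hy) ha hb hab

end Stage

section SSPRK33

variable {𝕜 V : Type*} [DivisionSemiring 𝕜] [AddCommMonoid V] [Module 𝕜 V]

/-- One step of size `τ` of the SSPRK(3,3) method of Gottlieb and Shu, with its intermediate stages
`u⁽¹⁾` and `u⁽²⁾` substituted into the last one. -/
def ssprk33Step (L : V → V) (τ : 𝕜) (u : V) : V :=
  sspStage L τ (1 / 3) (2 / 3) u (sspStage L τ (3 / 4) (1 / 4) u (eulerStep L τ u))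

variable [LinearOrder 𝕜] [IsStrictOrderedRing 𝕜] {L : V → V} {τ : 𝕜}

theorem mapsTo_ssprk33Step_of_convex {s : Set V} (hs : Convex 𝕜 s)
    (hE : Set.MapsTo (eulerStep L τ) s s) : Set.MapsTo (ssprk33Step L τ) s s := by
  intro u hu
  have hu₂ : sspStage L τ (3 / 4) (1 / 4) u (eulerStep L τ u) ∈ s :=
    sspStage_mem_of_convex hs hE (by positivity) (by positivity) (by norm_num) hu (hE hu)
  exact sspStage_mem_of_convex hs hE (by positivity) (by positivity) (by norm_num) hu hu₂

theorem ssprk33_nonexpansive_general {β : Type*} [Preorder β] {φ : V → β}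
    (hφ : QuasiconvexOn 𝕜 Set.univ φ) (hE : ∀ w, φ (eulerStep L τ w) ≤ φ w) (u : V) :
    φ (ssprk33Step L τ u) ≤ φ u := by
  have hconvex : Convex 𝕜 {w | φ w ≤ φ u} := by
    simpa only [Set.mem_univ, true_and] using hφ (φ u)
  have hinvariant : Set.MapsTo (eulerStep L τ) {w | φ w ≤ φ u} {w | φ w ≤ φ u} :=
    fun w hw ↦ (hE w).trans hw
  exact mapsTo_ssprk33Step_of_convex hconvex hinvariant le_rfl

end SSPRK33

theorem ssprk33_nonexpansive
    {V : Type*} [NormedAddCommGroup V] [NormedSpace ℝ V]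
    (L : V → V) (Δt : ℝ) (hΔt : 0 < Δt)
    (heuler : ∀ w : V, ‖w + Δt • L w‖ ≤ ‖w‖)
    (u u1 u2 uplus : V)
    (h1 : u1 = u + Δt • L u)
    (h2 : u2 = (3 / 4 : ℝ) • u + (1 / 4 : ℝ) • u1 + ((1 / 4 : ℝ) * Δt) • L u1)
    (h3 : uplus = (1 / 3 : ℝ) • u + (2 / 3 : ℝ) • u2 + ((2 / 3 : ℝ) * Δt) • L u2) :
    ‖uplus‖ ≤ ‖u‖ := by
  subst h1 h2 h3
  exact ssprk33_nonexpansive_general convexOn_univ_norm.quasiconvexOn heuler u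
end
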